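/- arXiv:2411.00679 — 2 statements merged into one kernel-verified Lean document; each statement's English description precedes it below -/
import Mathlib

section
/- Let G be a finite simple graph, S a set of vertices of G such that the subgraph of G induced on S is 2-degenerate and every vertex v ∈ S satisfies d_G(v) ≤ 7. Let L be a list assignment with |L(v)| = 10 for all vertices, and let α and β be two L-colorings of G that agree on every vertex outside S. Then G has a recoloring sequence from α to β that recolors each vertex of S at most twice and recolors no vertex outside S. -/
def IsLColoring {V : Type} (G : SimpleGraph V) (L : V → Finset ℕ) (φ : V → ℕ) : Prop :=
  (∀ v, φ v ∈ L v) ∧ ∀ ⦃u w : V⦄, G.Adj u w → φ u ≠ φ w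

def recolorCount {V : Type} {m : ℕ} (φ : Fin (m + 1) → V → ℕ) (v : V) : ℕ :=
  (Finset.univ.filter fun i : Fin m => φ i.castSucc v ≠ φ i.succ v).card

def IsRecolSeq {V : Type} (G : SimpleGraph V) (L : V → Finset ℕ) {m : ℕ}
    (φ : Fin (m + 1) → V → ℕ) (α β : V → ℕ) : Prop :=
  φ 0 = α ∧ φ (Fin.last m) = β ∧ (∀ i, IsLColoring G L (φ i)) ∧
    ∀ i : Fin m, ∃! v : V, φ i.castSucc v ≠ φ i.succ v

theorem recolorCount_eq_sum {V : Type} {m : ℕ} (φ : Fin (m + 1) → V → ℕ) (v : V) :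
    recolorCount φ v = ∑ i : Fin m, if φ i.castSucc v ≠ φ i.succ v then 1 else 0 := by
  unfold recolorCount
  rw [Finset.card_filter]

theorem existsUnique_update {V : Type} [DecidableEq V] (α : V → ℕ) (v : V) (c : ℕ)
    (h : c ≠ α v) : ∃! u : V, α u ≠ Function.update α v c u := by
  refine ⟨v, by simpa using h.symm, ?_⟩
  intro u hu
  by_contra hne
  exact hu (by simp [Function.update_of_ne hne])

theorem existsUnique_update' {V : Type} [DecidableEq V] (α : V → ℕ) (v : V) (c : ℕ)
    (h : c ≠ α v) : ∃! u : V, Function.update α v c u ≠ α u := by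
  simpa only [ne_comm] using existsUnique_update α v c h

theorem recol_prepend {V : Type} [DecidableEq V] (G : SimpleGraph V) (L : V → Finset ℕ)
    {m : ℕ} (φ : Fin (m + 1) → V → ℕ) (α β : V → ℕ) (v : V) (c : ℕ)
    (hα : IsLColoring G L α) (h : IsRecolSeq G L φ (Function.update α v c) β) :
    ∃ (m' : ℕ) (φ' : Fin (m' + 1) → V → ℕ), IsRecolSeq G L φ' α β ∧
      ∀ u, recolorCount φ' u ≤ recolorCount φ u + if u = v then 1 else 0 := by
  by_cases hc : c = α v
  · refine ⟨m, φ, ?_, fun u => Nat.le_add_right _ _⟩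
    rwa [hc, Function.update_eq_self] at h
  obtain ⟨h0, h1, h2, h3⟩ := h
  refine ⟨m + 1, Fin.cons (α := fun _ => V → ℕ) α φ, ⟨rfl, ?_, ?_, ?_⟩, ?_⟩
  · rw [← Fin.succ_last, Fin.cons_succ, h1]
  · intro i
    refine Fin.cases ?_ (fun j => ?_) i
    · simpa using hα
    · simpa using h2 j
  · intro i
    refine Fin.cases ?_ (fun j => ?_) i
    · rw [Fin.castSucc_zero, Fin.cons_zero, Fin.cons_succ, h0]
      exact existsUnique_update α v c hc
    · rw [← Fin.succ_castSucc, Fin.cons_succ, Fin.cons_succ]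
      exact h3 j
  · intro u
    rw [recolorCount_eq_sum, recolorCount_eq_sum, Fin.sum_univ_succ]
    simp only [← Fin.succ_castSucc, Fin.cons_succ, Fin.castSucc_zero, Fin.cons_zero, h0]
    rw [add_comm]
    gcongr
    by_cases hu : u = v
    · simp only [hu, if_true]; split_ifs <;> simp
    · simp [hu]

theorem recol_append {V : Type} [DecidableEq V] (G : SimpleGraph V) (L : V → Finset ℕ)
    {m : ℕ} (φ : Fin (m + 1) → V → ℕ) (α β : V → ℕ) (v : V) (c : ℕ)
    (hβ : IsLColoring G L β) (h : IsRecolSeq G L φ α (Function.update β v c)) :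
    ∃ (m' : ℕ) (φ' : Fin (m' + 1) → V → ℕ), IsRecolSeq G L φ' α β ∧
      ∀ u, recolorCount φ' u ≤ recolorCount φ u + if u = v then 1 else 0 := by
  by_cases hc : c = β v
  · refine ⟨m, φ, ?_, fun u => Nat.le_add_right _ _⟩
    rwa [hc, Function.update_eq_self] at h
  obtain ⟨h0, h1, h2, h3⟩ := h
  refine ⟨m + 1, Fin.snoc (α := fun _ => V → ℕ) φ β, ⟨?_, ?_, ?_, ?_⟩, ?_⟩
  · rw [← Fin.castSucc_zero, Fin.snoc_castSucc, h0]
  · rw [Fin.snoc_last]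
  · intro i
    refine Fin.lastCases ?_ (fun j => ?_) i
    · simpa using hβ
    · simpa using h2 j
  · intro i
    refine Fin.lastCases ?_ (fun j => ?_) i
    · rw [Fin.succ_last, Fin.snoc_last, Fin.snoc_castSucc, h1]
      exact existsUnique_update' β v c hc
    · rw [Fin.succ_castSucc, Fin.snoc_castSucc, Fin.snoc_castSucc]
      exact h3 j
  · intro u
    rw [recolorCount_eq_sum, recolorCount_eq_sum, Fin.sum_univ_castSucc]
    simp only [Fin.succ_castSucc, Fin.snoc_castSucc, Fin.succ_last, Fin.snoc_last, h1]
    gcongr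
    by_cases hu : u = v
    · simp only [hu, if_true]; split_ifs <;> simp
    · simp [hu]

theorem isLColoring_update {V : Type} [DecidableEq V] (G : SimpleGraph V) (L : V → Finset ℕ)
    (α : V → ℕ) (v : V) (c : ℕ) (hα : IsLColoring G L α) (hc : c ∈ L v)
    (h : ∀ w, G.Adj v w → c ≠ α w) : IsLColoring G L (Function.update α v c) := by
  refine ⟨fun u => ?_, fun u w huw => ?_⟩
  · by_cases hu : u = v
    · subst hu; simpa using hc
    · simpa [Function.update_of_ne hu] using hα.1 u
  · by_cases hu : u = v
    · subst hu
      rw [Function.update_self, Function.update_of_ne huw.ne']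
      exact h w huw
    · by_cases hw : w = v
      · subst hw
        rw [Function.update_self, Function.update_of_ne hu]
        exact (h u huw.symm).symm
      · rw [Function.update_of_ne hu, Function.update_of_ne hw]
        exact hα.2 huw

/-- if `α` and `β` are `L`-colorings (with all lists of size 10)
agreeing outside `S`, the subgraph induced on `S` is 2-degenerate, and every
vertex of `S` has degree at most 7 in `G`, then `G` has a recoloring sequence
from `α` to `β` that recolors each vertex of `S` at most twice and no vertex
outside `S`. -/
theorem stmt_3 {V : Type} [Fintype V] [DecidableEq V]
    (G : SimpleGraph V) [DecidableRel G.Adj]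
    (L : V → Finset ℕ) (hL : ∀ v, (L v).card = 10)
    (S : Finset V)
    (hdegen : ∀ t : Finset V, t ⊆ S → t.Nonempty →
      ∃ v ∈ t, (t.filter (G.Adj v)).card ≤ 2)
    (hdeg : ∀ v ∈ S, G.degree v ≤ 7)
    (α β : V → ℕ) (hα : IsLColoring G L α) (hβ : IsLColoring G L β)
    (hagree : ∀ v : V, v ∉ S → α v = β v) :
    ∃ (m : ℕ) (φ : Fin (m + 1) → V → ℕ),
      IsRecolSeq G L φ α β ∧ (∀ v ∈ S, recolorCount φ v ≤ 2) ∧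
      ∀ v : V, v ∉ S → recolorCount φ v = 0 := by
  induction hn : S.card generalizing S α β with
  | zero =>
    have hS : S = ∅ := Finset.card_eq_zero.mp hn
    subst hS
    have hab : α = β := funext fun v => hagree v (by simp)
    exact ⟨0, fun _ => α, ⟨rfl, hab, fun _ => hα, fun i => i.elim0⟩,
      fun v _ => by simp [recolorCount], fun v _ => by simp [recolorCount]⟩
  | succ n ih =>
    have hne : S.Nonempty := Finset.card_pos.mp (by omega)
    obtain ⟨v, hv, hv2⟩ := hdegen S subset_rfl hne
    -- pick the intermediate color of `v`
    obtain ⟨c, hcL, hc⟩ : ∃ c ∈ L v, c ∉ (G.neighborFinset v).image α ∪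
        (S.filter (G.Adj v)).image β := by
      apply Finset.exists_mem_notMem_of_card_lt_card
      have h1 := Finset.card_union_le ((G.neighborFinset v).image α)
        ((S.filter (G.Adj v)).image β)
      have h2 : ((G.neighborFinset v).image α).card ≤ (G.neighborFinset v).card :=
        Finset.card_image_le
      have h3 : ((S.filter (G.Adj v)).image β).card ≤ (S.filter (G.Adj v)).card :=
        Finset.card_image_le
      have h4 := hdeg v hv
      rw [← G.card_neighborFinset_eq_degree] at h4
      have h5 := hL v
      omega
    have hcα : ∀ w, G.Adj v w → c ≠ α w := by
      rintro w hw rfl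
      exact hc (Finset.mem_union_left _ (Finset.mem_image_of_mem _ (by simpa using hw)))
    have hcβ : ∀ w, G.Adj v w → c ≠ β w := by
      intro w hw
      by_cases hwS : w ∈ S
      · rintro rfl
        exact hc (Finset.mem_union_right _
          (Finset.mem_image_of_mem _ (by simpa using ⟨hwS, hw⟩)))
      · rw [← hagree w hwS]
        exact hcα w hw
    obtain ⟨m, φ, hφ, hin, hout⟩ := ih (S.erase v)
      (fun t ht => hdegen t (ht.trans (Finset.erase_subset _ _)))
      (fun u hu => hdeg u (Finset.mem_of_mem_erase hu))
      (Function.update α v c) (Function.update β v c)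
      (isLColoring_update G L α v c hα hcL hcα) (isLColoring_update G L β v c hβ hcL hcβ)
      (fun u hu => by
        by_cases huv : u = v
        · subst huv; simp
        · rw [Function.update_of_ne huv, Function.update_of_ne huv]
          exact hagree u fun h => hu (Finset.mem_erase.mpr ⟨huv, h⟩))
      (by rw [Finset.card_erase_of_mem hv]; omega)
    obtain ⟨m1, φ1, hφ1, hc1⟩ := recol_prepend G L φ α _ v c hα hφ
    obtain ⟨m2, φ2, hφ2, hc2⟩ := recol_append G L φ1 α β v c hβ hφ1
    refine ⟨m2, φ2, hφ2, fun u hu => ?_, fun u hu => ?_⟩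
    · have e1 := hc1 u
      have e2 := hc2 u
      by_cases huv : u = v
      · have e3 := hout u (by simp [huv])
        rw [if_pos huv] at e1 e2
        omega
      · have e3 := hin u (Finset.mem_erase.mpr ⟨huv, hu⟩)
        rw [if_neg huv] at e1 e2
        omega
    · have e1 := hc1 u
      have e2 := hc2 u
      have huv : u ≠ v := fun h => hu (h ▸ hv)
      have e3 := hout u fun h => hu (Finset.mem_of_mem_erase h)
      rw [if_neg huv] at e1 e2
      omega
end

section
/- Fix an integer k ≥ 416. Let G be a finite simple graph, L a 10-assignment for G, and α, β two L-colorings of G. Suppose G contains three distinct vertices a, b, c with ab and ac edges of G and d_G(a) = d_G(b) = d_G(c) = 5. Let S = {a, b, c}. If there exists a k-good recoloring sequence in G − S from the restriction of α to G − S to the restriction of β to G − S, then there exists a k-good recoloring sequence in G from α to β. -/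
open Function in
/-- reachability by valid single recolorings, recording how often each vertex is recolored -/
inductive Reach {V : Type} [DecidableEq V] (G : SimpleGraph V) (L : V → Finset ℕ)
    (α : V → ℕ) : (V → ℕ) → (V → ℕ) → Prop
  | refl : Reach G L α α (fun _ => 0)
  | step {φ N : V → ℕ} (v : V) (q : ℕ) (h : Reach G L α φ N) (hq : q ∈ L v) (hne : q ≠ φ v)
      (hadj : ∀ w, G.Adj v w → φ w ≠ q) :
      Reach G L α (update φ v q) (update N v (N v + 1))

/-- valid list of moves on `G - S` starting from `φ` -/
def VOut {V : Type} [DecidableEq V] (G : SimpleGraph V) (L : V → Finset ℕ) (S : Set V) :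
    (V → ℕ) → List (V × ℕ) → Prop
  | _, [] => True
  | φ, m :: l => m.1 ∉ S ∧ m.2 ∈ L m.1 ∧ m.2 ≠ φ m.1 ∧
      (∀ w, w ∉ S → G.Adj m.1 w → φ w ≠ m.2) ∧ VOut G L S (Function.update φ m.1 m.2) l

/-- final coloring -/
def finC {V : Type} [DecidableEq V] : (V → ℕ) → List (V × ℕ) → (V → ℕ)
  | φ, [] => φ
  | φ, m :: l => finC (Function.update φ m.1 m.2) l

def cnt {V : Type} [DecidableEq V] (l : List (V × ℕ)) (x : V) : ℕ :=
  l.countP (fun m => decide (m.1 = x))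

def ev {V : Type} (G : SimpleGraph V) [DecidableRel G.Adj] (v : V) :
    List (V × ℕ) → List ℕ
  | [] => []
  | m :: l => if G.Adj v m.1 then m.2 :: ev G v l else ev G v l

section
variable {V : Type} [DecidableEq V] {G : SimpleGraph V} {L : V → Finset ℕ}

theorem VOut_congr {S : Set V} (l : List (V × ℕ)) : ∀ (φ ψ : V → ℕ), (∀ w, w ∉ S → φ w = ψ w) →
    VOut G L S φ l → VOut G L S ψ l := by
  induction l with
  | nil => intros; trivial
  | cons m l ih =>
    intro φ ψ h hv
    obtain ⟨h1, h2, h3, h4, h5⟩ := hv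
    refine ⟨h1, h2, by rw [← h _ h1]; exact h3, fun w hw ha => by rw [← h _ hw]; exact h4 w hw ha,
      ih _ _ ?_ h5⟩
    intro w hw
    by_cases hwm : w = m.1
    · subst hwm; simp
    · simp [hwm, h w hw]

theorem finC_congr {S : Set V} (l : List (V × ℕ)) : ∀ (φ ψ : V → ℕ), (∀ w, w ∉ S → φ w = ψ w) →
    ∀ w, w ∉ S → finC φ l w = finC ψ l w := by
  induction l with
  | nil => intro φ ψ h; exact h
  | cons m l ih =>
    intro φ ψ h
    refine ih _ _ ?_
    intro w hw
    by_cases hwm : w = m.1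
    · subst hwm; simp
    · simp [hwm, h w hw]

theorem Reach.col {α φ N : V → ℕ} (hα : IsLColoring G L α) (h : Reach G L α φ N) :
    IsLColoring G L φ := by
  induction h with
  | refl => exact hα
  | @step φ N v q h hq hne hadj ih =>
    refine ⟨fun w => ?_, fun u w huw => ?_⟩
    · by_cases hw : w = v
      · subst hw; simpa using hq
      · simpa [hw] using ih.1 w
    · by_cases hu : u = v
      · subst hu
        have : w ≠ u := huw.ne'
        simpa [this] using (hadj w huw).symm
      · by_cases hw : w = v
        · subst hw
          simpa [hu] using (hadj u huw.symm)
        · simpa [hu, hw] using ih.2 huw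

theorem Reach.move {α φ N : V → ℕ} (h : Reach G L α φ N) (v : V) (q : ℕ) (hq : q ∈ L v)
    (hadj : ∀ w, G.Adj v w → φ w ≠ q) :
    ∃ N', Reach G L α (Function.update φ v q) N' ∧ N' v ≤ N v + 1 ∧ ∀ w, w ≠ v → N' w = N w := by
  by_cases hne : q = φ v
  · refine ⟨N, ?_, by omega, fun _ _ => rfl⟩
    rw [hne, Function.update_eq_self]; exact h
  · refine ⟨_, h.step v q hq hne hadj, by simp, fun w hw => by simp [hw]⟩

theorem Reach.toSeq {α φ N : V → ℕ} (hα : IsLColoring G L α) (h : Reach G L α φ N) :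
    ∃ (M : ℕ) (ψ : Fin (M + 1) → V → ℕ), IsRecolSeq G L ψ α φ ∧ ∀ u, recolorCount ψ u = N u := by
  induction h with
  | refl =>
    refine ⟨0, fun _ => α, ⟨rfl, rfl, fun _ => hα, fun i => i.elim0⟩, fun u => ?_⟩
    simp [recolorCount]
  | @step φ N v q h hq hne hadj ih =>
    have hcol := (h.step v q hq hne hadj).col hα
    obtain ⟨M, ψ, ⟨h0, hl, hc, hs⟩, hn⟩ := ih
    have key : ∀ i : Fin (M + 1), (Fin.snoc (α := fun _ => V → ℕ) ψ (Function.update φ v q)) i.castSucc = ψ i :=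
      fun i => Fin.snoc_castSucc (α := fun _ => V → ℕ) _ _ i
    have keyl : (Fin.snoc (α := fun _ => V → ℕ) ψ (Function.update φ v q)) (Fin.last (M+1)) = Function.update φ v q :=
      Fin.snoc_last (α := fun _ => V → ℕ) _ _
    generalize Fin.snoc (α := fun _ => V → ℕ) ψ (Function.update φ v q) = χ at key keyl
    refine ⟨M + 1, χ, ⟨?_, keyl, ?_, ?_⟩, ?_⟩
    · rw [← Fin.castSucc_zero, key, h0]
    · intro i
      refine Fin.lastCases ?_ (fun i => ?_) i
      · rw [keyl]; exact hcol
      · rw [key]; exact hc i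
    · intro i
      refine Fin.lastCases ?_ (fun i => ?_) i
      · rw [key, Fin.succ_last, keyl, hl]
        refine ⟨v, by simpa using hne.symm, fun w hw => ?_⟩
        by_contra hwv
        simp [hwv] at hw
      · rw [key, Fin.succ_castSucc, key]; exact hs i
    · intro u
      have := hn u
      simp only [recolorCount, Finset.card_filter] at this ⊢
      rw [Fin.sum_univ_castSucc]
      simp only [key, Fin.succ_castSucc, Fin.succ_last, keyl, hl, this]
      by_cases hu : u = v
      · subst hu; simp [hne.symm]
      · simp [hu]

theorem fromSeq {S : Set V} {m : ℕ} : ∀ (φ : Fin (m + 1) → ↥(Sᶜ) → ℕ) (χ : V → ℕ),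
    (∀ u : ↥(Sᶜ), χ u.1 = φ 0 u) →
    (∀ i, IsLColoring (G.induce Sᶜ) (fun u => L u.1) (φ i)) →
    (∀ i : Fin m, ∃! v : ↥(Sᶜ), φ i.castSucc v ≠ φ i.succ v) →
    ∃ l : List (V × ℕ), VOut G L S χ l ∧ (∀ u : ↥(Sᶜ), finC χ l u.1 = φ (Fin.last m) u) ∧
      (∀ u : ↥(Sᶜ), cnt l u.1 = recolorCount φ u) ∧ ∀ u ∈ S, cnt l u = 0 := by
  induction m with
  | zero =>
    intro φ χ h0 _ _
    exact ⟨[], trivial, h0, fun u => by simp [cnt, recolorCount], fun u _ => by simp [cnt]⟩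
  | succ m ih =>
    intro φ χ h0 hc hs
    obtain ⟨v, hv, huniq⟩ := hs 0
    have hoth : ∀ u, u ≠ v → φ 0 u = φ 1 u := fun u hu => by
      by_contra h; exact hu (huniq u h)
    simp only [Fin.castSucc_zero, Fin.succ_zero_eq_one] at hv
    have hst : ∀ u : ↥(Sᶜ), Function.update χ v.1 (φ 1 v) u.1 = φ 1 u := by
      intro u
      by_cases hu : u = v
      · subst hu; simp
      · have : ¬ (u.1 = v.1) := fun h => hu (Subtype.ext h)
        simp [this, h0, hoth u hu]
    obtain ⟨l, h1, h2, h3, h4⟩ := ih (fun i => φ i.succ) (Function.update χ v.1 (φ 1 v)) hst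
      (fun i => hc i.succ) (fun i => by simpa using hs i.succ)
    · refine ⟨(v.1, φ 1 v) :: l, ⟨v.2, (hc 1).1 v, ?_, ?_, h1⟩, ?_, ?_, ?_⟩
      · simp only; rw [h0]; exact hv.symm
      · intro w hw ha
        have hne : (⟨w, hw⟩ : ↥(Sᶜ)) ≠ v := by
          rintro rfl; exact ha.ne rfl
        have := (hc 1).2 (u := v) (w := ⟨w, hw⟩) (by simpa using ha)
        rw [← hoth _ hne, ← h0] at this
        exact this.symm
      · intro u; exact h2 u
      · intro u
        have := h3 u
        simp only [recolorCount, Finset.card_filter] at this ⊢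
        rw [Fin.sum_univ_succ]
        simp only [cnt, List.countP_cons] at this ⊢
        rw [this, add_comm]
        congr 1
        by_cases hu : u = v
        · subst hu; simp [hv]
        · have : ¬ (v.1 = u.1) := fun h => hu (Subtype.ext h.symm)
          simp [this, hoth u hu]
      · intro u hu
        have := h4 u hu
        have hne : ¬ (v.1 = u) := by rintro rfl; exact v.2 hu
        simp only [cnt, List.countP_cons] at this ⊢
        simp [this, hne]

theorem ev_length [Fintype V] [DecidableRel G.Adj] (v : V) (l : List (V × ℕ)) :
    (ev G v l).length = ∑ x ∈ G.neighborFinset v, cnt l x := by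
  induction l with
  | nil => simp [ev, cnt]
  | cons m l ih =>
    have : ∀ x, cnt (m :: l) x = cnt l x + if m.1 = x then 1 else 0 := by
      intro x; simp [cnt, List.countP_cons]
    simp only [this, Finset.sum_add_distrib, ← ih, ev]
    rw [Finset.sum_ite_eq]
    by_cases h : G.Adj v m.1 <;> simp [h]

/-- state invariant for `b` and `c` -/
def PB (G : SimpleGraph V) [DecidableRel G.Adj] (k : ℕ) (b : V) (φ N : V → ℕ)
    (l : List (V × ℕ)) : Prop :=
  ∃ t ≤ 5, φ b ∉ (ev G b l).take t ∧ 4 * N b + min (N b) 10 + (ev G b l).length ≤ 4 * k + t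

/-- state invariant for `a` -/
def PA (G : SimpleGraph V) [DecidableRel G.Adj] (k : ℕ) (a b c : V) (φ N : V → ℕ)
    (l : List (V × ℕ)) : Prop :=
  ∃ t ≤ 4, φ a ∉ (ev G a l).take t ∧
    4 * N a + (ev G a l).length ≤ 3 * k + t + 8 * (min (N b) 10 + min (N c) 10)

theorem pick (s : Finset ℕ) (t : Finset ℕ) (h : t.card < s.card) : ∃ q ∈ s, q ∉ t :=
  Finset.exists_mem_notMem_of_card_lt_card h

theorem take_card (e : List ℕ) (t : ℕ) : (e.take t).toFinset.card ≤ t :=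
  (List.toFinset_card_le _).trans (by simp)

/-- fix `b` -/
theorem fixB [Fintype V] [DecidableRel G.Adj] (k : ℕ) (hL : ∀ u, (L u).card = 10)
    (α : V → ℕ) (hα : IsLColoring G L α)
    (a b c : V) (hab : G.Adj a b) (hac : a ≠ c) (hbc : b ≠ c)
    (hda : G.degree a = 5) (hdb : G.degree b = 5)
    (φ N : V → ℕ) (h : Reach G L α φ N) (x : V) (q : ℕ) (l : List (V × ℕ))
    (ha : PA G k a b c φ N ((x, q) :: l)) (hb : PB G k b φ N ((x, q) :: l)) :
    ∃ φ' N', Reach G L α φ' N' ∧ (∀ w, w ≠ a → w ≠ b → φ' w = φ w ∧ N' w = N w) ∧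
      PA G k a b c φ' N' ((x, q) :: l) ∧ PB G k b φ' N' ((x, q) :: l) ∧
      (G.Adj b x → φ' b ≠ q) := by
  by_cases hx : G.Adj b x ∧ φ b = q
  swap
  · exact ⟨φ, N, h, fun _ _ _ => ⟨rfl, rfl⟩, ha, hb, fun h1 h2 => hx ⟨h1, h2⟩⟩
  obtain ⟨hx, rfl⟩ := hx
  have hev : ev G b ((x, φ b) :: l) = φ b :: ev G b l := by simp [ev, hx]
  have hne : a ≠ b := hab.ne
  obtain ⟨tb, htb, htb1, htb2⟩ := hb
  have htb0 : tb = 0 := by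
    rcases tb with _ | tb
    · rfl
    · simp [hev] at htb1
  subst htb0
  obtain ⟨ta, hta, hta1, hta2⟩ := ha
  rw [SimpleGraph.degree] at hda hdb
  have hma : a ∈ G.neighborFinset b := by simpa using hab.symm
  by_cases hn : N b < 10
  · -- boosted
    obtain ⟨p, hp, hp'⟩ := pick (L b) (((G.neighborFinset b).erase a).image φ ∪
      ((ev G b ((x, φ b) :: l)).take 5).toFinset) (by
        have h1 := Finset.card_union_le (((G.neighborFinset b).erase a).image φ)
          ((ev G b ((x, φ b) :: l)).take 5).toFinset
        have h2 := take_card (ev G b ((x, φ b) :: l)) 5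
        have h3 : (((G.neighborFinset b).erase a).image φ).card ≤ _ := Finset.card_image_le
        rw [Finset.card_erase_of_mem hma] at h3
        have := hL b
        omega)
    simp only [Finset.mem_union, not_or, List.mem_toFinset] at hp'
    obtain ⟨hp1, hp2⟩ := hp'
    have hp1' : ∀ w, G.Adj b w → w ≠ a → φ w ≠ p := fun w hw hwa e =>
      hp1 (Finset.mem_image.2 ⟨w, by simp [hw, hwa], e⟩)
    have hpb : p ≠ φ b := by
      rintro rfl; simp [hev] at hp2
    by_cases hpa : φ a = p
    · obtain ⟨r, hr, hr'⟩ := pick (L a) ((G.neighborFinset a).image φ ∪ {φ a}) (by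
        have h1 := Finset.card_union_le ((G.neighborFinset a).image φ) {φ a}
        have h3 : ((G.neighborFinset a).image φ).card ≤ _ := Finset.card_image_le
        have := hL a
        simp only [Finset.card_singleton] at h1
        omega)
      simp only [Finset.mem_union, not_or, Finset.mem_singleton] at hr'
      obtain ⟨hr1, hr2⟩ := hr'
      have hr1' : ∀ w, G.Adj a w → φ w ≠ r := fun w hw e =>
        hr1 (Finset.mem_image.2 ⟨w, by simp [hw], e⟩)
      have R1 := h.step a r hr hr2 hr1'
      have R2 := R1.step b p hp (by simpa [hne.symm] using hpb) (by
        intro w hw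
        by_cases hwa : w = a
        · subst hwa; simp only [Function.update_self]; rw [← hpa]; exact hr2
        · simpa [hwa] using hp1' w hw hwa)
      refine ⟨_, _, R2, ?_, ⟨0, by omega, by simp, ?_⟩, ⟨5, le_rfl, by simpa using hp2, ?_⟩, ?_⟩
      · intro w h1 h2; simp [h1, h2]
      · simp only [Function.update_self, ne_eq, hne, hne.symm, hac.symm, hbc.symm, not_false_eq_true, Function.update_of_ne]
        omega
      · simp only [Function.update_self, ne_eq, hne, hne.symm, hac.symm, hbc.symm, not_false_eq_true, Function.update_of_ne]
        omega
      · intro _; simpa using hpb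
    · have R2 := h.step b p hp hpb (by
        intro w hw
        by_cases hwa : w = a
        · subst hwa; exact hpa
        · exact hp1' w hw hwa)
      refine ⟨_, _, R2, ?_, ⟨ta, hta, by simpa [hne] using hta1, ?_⟩,
        ⟨5, le_rfl, by simpa using hp2, ?_⟩, ?_⟩
      · intro w h1 h2; simp [h2]
      · simp only [Function.update_self, ne_eq, hne, hbc.symm, not_false_eq_true, Function.update_of_ne]
        omega
      · simp only [Function.update_self]
        omega
      · intro _; simpa using hpb
  · obtain ⟨p, hp, hp'⟩ := pick (L b) ((G.neighborFinset b).image φ ∪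
      ((ev G b ((x, φ b) :: l)).take 4).toFinset) (by
        have h1 := Finset.card_union_le ((G.neighborFinset b).image φ)
          ((ev G b ((x, φ b) :: l)).take 4).toFinset
        have h2 := take_card (ev G b ((x, φ b) :: l)) 4
        have h3 : ((G.neighborFinset b).image φ).card ≤ _ := Finset.card_image_le
        have := hL b
        omega)
    simp only [Finset.mem_union, not_or, List.mem_toFinset] at hp'
    obtain ⟨hp1, hp2⟩ := hp'
    have hp1' : ∀ w, G.Adj b w → φ w ≠ p := fun w hw e =>
      hp1 (Finset.mem_image.2 ⟨w, by simp [hw], e⟩)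
    have hpb : p ≠ φ b := by
      rintro rfl; simp [hev] at hp2
    have R2 := h.step b p hp hpb hp1'
    refine ⟨_, _, R2, ?_, ⟨ta, hta, by simpa [hne] using hta1, ?_⟩,
      ⟨4, by omega, by simpa using hp2, ?_⟩, ?_⟩
    · intro w h1 h2; simp [h2]
    · simp only [Function.update_self, ne_eq, hne, hbc.symm, not_false_eq_true, Function.update_of_ne]
      omega
    · simp only [Function.update_self]
      omega
    · intro _; simpa using hpb

/-- fix `a` -/
theorem fixA [Fintype V] [DecidableRel G.Adj] (k : ℕ) (hL : ∀ u, (L u).card = 10)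
    (α : V → ℕ) (a b c : V) (hab : a ≠ b) (hac : a ≠ c) (hda : G.degree a = 5)
    (φ N : V → ℕ) (h : Reach G L α φ N) (x : V) (q : ℕ) (l : List (V × ℕ))
    (ha : PA G k a b c φ N ((x, q) :: l)) :
    ∃ φ' N', Reach G L α φ' N' ∧ (∀ w, w ≠ a → φ' w = φ w ∧ N' w = N w) ∧
      PA G k a b c φ' N' ((x, q) :: l) ∧ (G.Adj a x → φ' a ≠ q) := by
  by_cases hx : G.Adj a x ∧ φ a = q
  swap
  · exact ⟨φ, N, h, fun _ _ => ⟨rfl, rfl⟩, ha, fun h1 h2 => hx ⟨h1, h2⟩⟩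
  obtain ⟨hx, rfl⟩ := hx
  have hev : ev G a ((x, φ a) :: l) = φ a :: ev G a l := by simp [ev, hx]
  obtain ⟨ta, hta, hta1, hta2⟩ := ha
  have hta0 : ta = 0 := by
    rcases ta with _ | ta
    · rfl
    · simp [hev] at hta1
  subst hta0
  rw [SimpleGraph.degree] at hda
  obtain ⟨p, hp, hp'⟩ := pick (L a) ((G.neighborFinset a).image φ ∪
    ((ev G a ((x, φ a) :: l)).take 4).toFinset) (by
      have h1 := Finset.card_union_le ((G.neighborFinset a).image φ)
        ((ev G a ((x, φ a) :: l)).take 4).toFinset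
      have h2 := take_card (ev G a ((x, φ a) :: l)) 4
      have h3 : ((G.neighborFinset a).image φ).card ≤ _ := Finset.card_image_le
      have := hL a
      omega)
  simp only [Finset.mem_union, not_or, List.mem_toFinset] at hp'
  obtain ⟨hp1, hp2⟩ := hp'
  have hp1' : ∀ w, G.Adj a w → φ w ≠ p := fun w hw e =>
    hp1 (Finset.mem_image.2 ⟨w, by simp [hw], e⟩)
  have hpb : p ≠ φ a := by
    rintro rfl; simp [hev] at hp2
  refine ⟨_, _, h.step a p hp hpb hp1', ?_, ⟨4, by omega, by simpa using hp2, ?_⟩, ?_⟩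
  · intro w h1; simp [h1]
  · simp only [Function.update_self, ne_eq, hab.symm, hac.symm, not_false_eq_true, Function.update_of_ne]
    omega
  · intro _; simpa using hpb

/-- advancing the event list of one vertex -/
theorem advance [DecidableRel G.Adj] (v x : V) (q y : ℕ) (l : List (V × ℕ)) (t : ℕ)
    (h : y ∉ (ev G v ((x, q) :: l)).take t) :
    ∃ t' ≤ t, y ∉ (ev G v l).take t' ∧
      (ev G v l).length + t ≤ (ev G v ((x, q) :: l)).length + t' := by
  by_cases hx : G.Adj v x
  · have hev : ev G v ((x, q) :: l) = q :: ev G v l := by simp [ev, hx]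
    rw [hev] at h ⊢
    rcases t with _ | t
    · exact ⟨0, le_rfl, by simp, by simp⟩
    · refine ⟨t, by omega, fun h' => h ?_, by simp; omega⟩
      simp [h']
  · have hev : ev G v ((x, q) :: l) = ev G v l := by simp [ev, hx]
    rw [hev] at h ⊢
    exact ⟨t, le_rfl, h, le_rfl⟩

theorem mainInd [Fintype V] [DecidableRel G.Adj] (k : ℕ) (hL : ∀ u, (L u).card = 10)
    (α : V → ℕ) (hα : IsLColoring G L α)
    (a b c : V) (hab : G.Adj a b) (hac : G.Adj a c) (hbc : b ≠ c)
    (hda : G.degree a = 5) (hdb : G.degree b = 5) (hdc : G.degree c = 5)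
    (l : List (V × ℕ)) : ∀ (φ N : V → ℕ), Reach G L α φ N → VOut G L {a, b, c} φ l →
    PA G k a b c φ N l → PB G k b φ N l → PB G k c φ N l →
    ∃ φ' N', Reach G L α φ' N' ∧
      (∀ w, w ∉ ({a, b, c} : Set V) → φ' w = finC φ l w ∧ N' w = N w + cnt l w) ∧
      PA G k a b c φ' N' [] ∧ PB G k b φ' N' [] ∧ PB G k c φ' N' [] := by
  induction l with
  | nil =>
    intro φ N h _ ha hb hc
    exact ⟨φ, N, h, fun w _ => ⟨rfl, by simp [cnt]⟩, ha, hb, hc⟩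
  | cons m l ih =>
    obtain ⟨x, q⟩ := m
    intro φ N h hv ha hb hc
    obtain ⟨hxS, hq, hqx, hadj, hv'⟩ := hv
    simp only [Set.mem_insert_iff, Set.mem_singleton_iff, not_or] at hxS hq hqx hadj hv' ih ⊢
    obtain ⟨hxa, hxb, hxc⟩ := hxS
    obtain ⟨φ1, N1, R1, E1, A1, B1, F1⟩ :=
      fixB k hL α hα a b c hab hac.ne hbc hda hdb φ N h x q l ha hb
    have C1 : PB G k c φ1 N1 ((x, q) :: l) := by
      have := E1 c hac.ne' hbc.symm
      unfold PB at hc ⊢; rw [this.1, this.2]; exact hc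
    obtain ⟨φ2, N2, R2, E2, A2, C2, F2⟩ :=
      fixB k hL α hα a c b hac hab.ne hbc.symm hda hdc φ1 N1 R1 x q l
        (by unfold PA at A1 ⊢; simpa only [add_comm (min (N1 c) 10)] using A1) C1
    have A2' : PA G k a b c φ2 N2 ((x, q) :: l) := by
      unfold PA at A2 ⊢; simpa only [add_comm (min (N2 c) 10)] using A2
    obtain ⟨φ3, N3, R3, E3, A3, F3⟩ :=
      fixA k hL α a b c hab.ne hac.ne hda φ2 N2 R2 x q l A2'
    have e2b := E2 b hab.ne' hbc
    have e3b := E3 b hab.ne'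
    have e3c := E3 c hac.ne'
    have B3 : PB G k b φ3 N3 ((x, q) :: l) := by
      unfold PB at B1 ⊢; rw [e3b.1, e3b.2, e2b.1, e2b.2]; exact B1
    have C3 : PB G k c φ3 N3 ((x, q) :: l) := by
      unfold PB at C2 ⊢; rw [e3c.1, e3c.2]; exact C2
    have E : ∀ w, w ≠ a → w ≠ b → w ≠ c → φ3 w = φ w ∧ N3 w = N w := by
      intro w h1 h2 h3
      rw [(E3 w h1).1, (E3 w h1).2, (E2 w h1 h3).1, (E2 w h1 h3).2]
      exact E1 w h1 h2
    have R4 := R3.step x q hq (by rw [(E x hxa hxb hxc).1]; exact hqx) (by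
      intro w hw
      by_cases h1 : w = a
      · subst h1; exact F3 hw.symm
      by_cases h2 : w = b
      · subst h2; rw [e3b.1, e2b.1]; exact F1 hw.symm
      by_cases h3 : w = c
      · subst h3; rw [e3c.1]; exact F2 hw.symm
      rw [(E w h1 h2 h3).1]; exact hadj w ⟨h1, h2, h3⟩ hw)
    have hEu : ∀ w, w ∉ ({a, b, c} : Set V) → Function.update φ x q w = Function.update φ3 x q w := by
      intro w hw
      simp only [Set.mem_insert_iff, Set.mem_singleton_iff, not_or] at hw
      by_cases hwx : w = x
      · subst hwx; simp
      · simp [hwx, (E w hw.1 hw.2.1 hw.2.2).1]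
    obtain ⟨φ', N', R', E', A', B', C'⟩ := ih _ _ R4 (VOut_congr l _ _ hEu hv') (by
        obtain ⟨t, h1, h2, h3⟩ := A3
        obtain ⟨t', h1', h2', h3'⟩ := advance _ _ _ _ _ _ h2
        refine ⟨t', by omega, by simpa [Ne.symm hxa] using h2', ?_⟩
        simp only [ne_eq, Ne.symm hxa, Ne.symm hxb, Ne.symm hxc, not_false_eq_true, Function.update_of_ne]
        omega) (by
        obtain ⟨t, h1, h2, h3⟩ := B3
        obtain ⟨t', h1', h2', h3'⟩ := advance _ _ _ _ _ _ h2
        refine ⟨t', by omega, by simpa [Ne.symm hxb] using h2', ?_⟩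
        simp only [ne_eq, Ne.symm hxb, not_false_eq_true, Function.update_of_ne]
        omega) (by
        obtain ⟨t, h1, h2, h3⟩ := C3
        obtain ⟨t', h1', h2', h3'⟩ := advance _ _ _ _ _ _ h2
        refine ⟨t', by omega, by simpa [Ne.symm hxc] using h2', ?_⟩
        simp only [ne_eq, Ne.symm hxc, not_false_eq_true, Function.update_of_ne]
        omega)
    refine ⟨φ', N', R', ?_, A', B', C'⟩
    intro w hw
    have hw' : w ∉ ({a, b, c} : Set V) := by simpa using hw
    refine ⟨?_, ?_⟩
    · rw [(E' w hw).1]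
      exact (finC_congr l _ _ hEu w hw').symm
    · rw [(E' w hw).2]
      have e := (E w hw.1 hw.2.1 hw.2.2).2
      by_cases hwx : w = x
      · subst hwx; simp [cnt, e]; omega
      · have : ¬ (x = w) := fun h => hwx h.symm
        simp [cnt, hwx, e, this]

end

/-- a 5-vertex with two 5-neighbors (RC(a)): if `G` contains this configuration and `G − S` has a
`k`-good recoloring sequence between the restrictions of `α` and `β` (`k ≥ 416`),
then `G` has a `k`-good recoloring sequence from `α` to `β`. -/
theorem stmt_6 {V : Type} [Fintype V] [DecidableEq V]
    (G : SimpleGraph V) [DecidableRel G.Adj]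
    (k : ℕ) (hk : 416 ≤ k)
    (L : V → Finset ℕ) (hL : ∀ u, (L u).card = 10)
    (α β : V → ℕ) (hα : IsLColoring G L α) (hβ : IsLColoring G L β)
    (a b c : V) (hnodup : ([a, b, c] : List V).Nodup)
    (he1: G.Adj a b)
    (he2: G.Adj a c)
    (hda : G.degree a = 5)
    (hdb : G.degree b = 5)
    (hdc : G.degree c = 5)
    (S : Set V) (hS : S = {a, b, c})
    (hrec : ∃ (m : ℕ) (φ : Fin (m + 1) → ↥(Sᶜ) → ℕ),
      IsRecolSeq (G.induce Sᶜ) (fun u => L u.1) φ (fun u => α u.1) (fun u => β u.1) ∧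
      ∀ u : ↥(Sᶜ), recolorCount φ u ≤ k) :
    ∃ (M : ℕ) (ψ : Fin (M + 1) → V → ℕ),
      IsRecolSeq G L ψ α β ∧ ∀ u : V, recolorCount ψ u ≤ k := by
  have hbc : b ≠ c := by
    simp at hnodup; exact hnodup.2
  have hab := he1.ne
  have hac := he2.ne
  subst hS
  obtain ⟨m, φ0, ⟨h00, h0l, h0c, h0s⟩, hcount⟩ := hrec
  obtain ⟨l, hv, hfin, hcnt, hcS⟩ := fromSeq (G := G) (L := L) φ0 α
    (fun u => by rw [h00]) h0c h0s
  have hle : ∀ w, cnt l w ≤ k := by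
    intro w
    by_cases hw : w ∈ ({a, b, c} : Set V)
    · rw [hcS w hw]; omega
    · have := hcnt ⟨w, hw⟩
      have h2 := hcount ⟨w, hw⟩
      simp only at this
      omega
  have hda' := hda
  have hdb' := hdb
  have hdc' := hdc
  rw [SimpleGraph.degree] at hda' hdb' hdc'
  have four : ∀ v, (G.neighborFinset v).card = 5 → G.Adj a v → (ev G v l).length ≤ 4 * k := by
    intro v hdv hv
    have hmem : a ∈ G.neighborFinset v := by simpa using hv.symm
    rw [ev_length, ← Finset.add_sum_erase _ _ hmem, hcS a (by simp)]
    have := Finset.sum_le_card_nsmul ((G.neighborFinset v).erase a) (cnt l) k (fun w _ => hle w)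
    rw [Finset.card_erase_of_mem hmem, hdv] at this
    simpa using this
  have three : (ev G a l).length ≤ 3 * k := by
    have hmb : b ∈ G.neighborFinset a := by simpa using he1
    have hmc : c ∈ (G.neighborFinset a).erase b := by simpa using ⟨hbc.symm, he2⟩
    rw [ev_length, ← Finset.add_sum_erase _ _ hmb, ← Finset.add_sum_erase _ _ hmc,
      hcS b (by simp), hcS c (by simp)]
    have := Finset.sum_le_card_nsmul (((G.neighborFinset a).erase b).erase c) (cnt l) k
      (fun w _ => hle w)
    rw [Finset.card_erase_of_mem hmc, Finset.card_erase_of_mem hmb, hda'] at this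
    simpa using this
  obtain ⟨φ, N, R, E, A, B, C⟩ := mainInd k hL α hα a b c he1 he2 hbc hda hdb hdc l α _
    Reach.refl hv ⟨0, by omega, by simp, by simpa using three⟩
    ⟨0, by omega, by simp, by simpa using four b hdb' he1⟩
    ⟨0, by omega, by simp, by simpa using four c hdc' he2⟩
  have hNa : N a + 1 ≤ k := by
    obtain ⟨t, h1, -, h3⟩ := A
    simp only [ev, List.length_nil] at h3
    omega
  have hNb : N b + 2 ≤ k := by
    obtain ⟨t, h1, -, h3⟩ := B
    simp only [ev, List.length_nil] at h3
    omega
  have hNc : N c + 2 ≤ k := by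
    obtain ⟨t, h1, -, h3⟩ := C
    simp only [ev, List.length_nil] at h3
    omega
  have hout : ∀ w, w ≠ a → w ≠ b → w ≠ c → φ w = β w ∧ N w ≤ k := by
    intro w h1 h2 h3
    have hw : w ∉ ({a, b, c} : Set V) := by simp [h1, h2, h3]
    have e := E w hw
    have f := hfin ⟨w, hw⟩
    rw [h0l] at f
    refine ⟨e.1.trans f, ?_⟩
    have := hle w
    omega
  -- temporary color for `b`
  obtain ⟨p, hp, hp'⟩ := pick (L b) ((G.neighborFinset b).image φ ∪ {β a}) (by
    have h1 := Finset.card_union_le ((G.neighborFinset b).image φ) {β a}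
    have h3 : ((G.neighborFinset b).image φ).card ≤ _ := Finset.card_image_le
    have := hL b
    simp only [Finset.card_singleton] at h1
    omega)
  simp only [Finset.mem_union, not_or, Finset.mem_singleton] at hp'
  obtain ⟨hp1, hp2⟩ := hp'
  obtain ⟨N1, R1, n1, m1⟩ := R.move b p hp (fun w hw e =>
    hp1 (Finset.mem_image.2 ⟨w, by simp [hw], e⟩))
  -- temporary color for `c`
  set φ1 := Function.update φ b p with hφ1
  obtain ⟨r, hr, hr'⟩ := pick (L c) ((G.neighborFinset c).image φ1 ∪ {β a, β b}) (by
    have h1 := Finset.card_union_le ((G.neighborFinset c).image φ1) {β a, β b}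
    have h3 : ((G.neighborFinset c).image φ1).card ≤ _ := Finset.card_image_le
    have := hL c
    have h4 : ({β a, β b} : Finset ℕ).card ≤ 2 := Finset.card_le_two
    omega)
  simp only [Finset.mem_union, not_or, Finset.mem_insert, Finset.mem_singleton] at hr'
  obtain ⟨hr1, hr2, hr3⟩ := hr'
  obtain ⟨N2, R2, n2, m2⟩ := R1.move c r hr (fun w hw e =>
    hr1 (Finset.mem_image.2 ⟨w, by simp [hw], e⟩))
  set φ2 := Function.update φ1 c r with hφ2
  have v2c : φ2 c = r := by simp [hφ2]
  have v2b : φ2 b = p := by simp [hφ2, hφ1, hbc]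
  have v2 : ∀ w, w ≠ a → w ≠ b → w ≠ c → φ2 w = β w := by
    intro w h1 h2 h3
    simp [hφ2, hφ1, h2, h3, (hout w h1 h2 h3).1]
  obtain ⟨N3, R3, n3, m3⟩ := R2.move a (β a) (hβ.1 a) (by
    intro w hw
    by_cases h2 : w = b
    · subst h2; rw [v2b]; exact hp2
    by_cases h3 : w = c
    · subst h3; rw [v2c]; exact hr2
    rw [v2 w hw.ne' h2 h3]; exact (hβ.2 hw).symm)
  set φ3 := Function.update φ2 a (β a) with hφ3
  have v3c : φ3 c = r := by simp [hφ3, v2c, hac.symm]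
  have v3 : ∀ w, w ≠ b → w ≠ c → φ3 w = β w := by
    intro w h2 h3
    by_cases h1 : w = a
    · subst h1; simp [hφ3]
    · simp [hφ3, h1, v2 w h1 h2 h3]
  obtain ⟨N4, R4, n4, m4⟩ := R3.move b (β b) (hβ.1 b) (by
    intro w hw
    by_cases h3 : w = c
    · subst h3; rw [v3c]; exact hr3
    rw [v3 w hw.ne' h3]; exact (hβ.2 hw).symm)
  set φ4 := Function.update φ3 b (β b) with hφ4
  have v4 : ∀ w, w ≠ c → φ4 w = β w := by
    intro w h3
    by_cases h1 : w = b
    · subst h1; simp [hφ4]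
    · simp [hφ4, h1, v3 w h1 h3]
  obtain ⟨N5, R5, n5, m5⟩ := R4.move c (β c) (hβ.1 c) (by
    intro w hw
    rw [v4 w hw.ne']; exact (hβ.2 hw).symm)
  have hfinal : Function.update φ4 c (β c) = β := by
    funext w
    by_cases h1 : w = c
    · subst h1; simp
    · simp [h1, v4 w h1]
  rw [hfinal] at R5
  obtain ⟨M, ψ, hψ, hψn⟩ := R5.toSeq hα
  refine ⟨M, ψ, hψ, fun u => ?_⟩
  rw [hψn]
  by_cases hua : u = a
  · subst hua
    rw [m5 _ hac, m4 _ hab]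
    rw [m2 _ hac, m1 _ hab] at n3
    omega
  by_cases hub : u = b
  · subst hub
    rw [m5 _ hbc]
    rw [m3 _ hab.symm, m2 _ hbc] at n4
    omega
  by_cases huc : u = c
  · subst huc
    rw [m4 _ hbc.symm, m3 _ hac.symm] at n5
    rw [m1 _ hbc.symm] at n2
    omega
  rw [m5 _ huc, m4 _ hub, m3 _ hua, m2 _ huc, m1 _ hub]
  exact (hout u hua hub huc).2
end
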